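/- There are only finitely many pairs (q,n), where q is a prime power and n is an integer with 1 < n < q and (n-1) dividing (q-1), such that every element of the finite field F_q is the sum of a 5-potent element and an n-potent element. -/

import Mathlib

/-!
Let `H` be the group of `(n - 1)`-th roots of unity of `F = F_q`, a proper subgroup of `Fˣ` with
`C_n = H ∪ {0}`, and let `S = C_k`. If `S + C_n = F`, then counting shows that `H` has index at most
`2 * k`, so colouring `F` by the cosets of `H`, with a further colour for `0`, takes boundedly many
colours. Fix `g ∈ Fˣ` outside of `H`. If `q` is large, the Hales–Jewett theorem yields `t ≠ 0` and
`b` such that `t • (S ∪ g • S) + b` is monochromatic. For `v = -t` and for `v = -t * g`, write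
`b / v = s + h` with `s ∈ S` and `h ∈ C_n`: then `b - v * s = v * h` lies in that copy, so its
colour is the one of `v`. Hence `-t` and `-t * g` have the same colour, contradicting `g ∉ H`.
-/

open Finset Combinatorics Pointwise

theorem exists_forall_subset_sum_ne_zero {ι G : Type*} [AddCommGroup G] (s : Finset ι)
    (hs : 2 ^ #s ≤ ENat.card G) :
    ∃ w : ι → G, ∀ t ⊆ s, t.Nonempty → ∑ i ∈ t, w i ≠ 0 := by
  classical
  induction s using Finset.induction_on with
  | empty => exact ⟨0, fun t ht hne => absurd (subset_empty.1 ht) hne.ne_empty⟩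
  | insert a s ha ih =>
    rw [card_insert_of_notMem ha] at hs
    obtain ⟨w, hw⟩ := ih ((pow_le_pow_right₀ one_le_two (Nat.le_succ _)).trans hs)
    have hcard : #(s.powerset.image fun t => -∑ i ∈ t, w i) < ENat.card G := by
      refine lt_of_lt_of_le ?_ hs
      exact_mod_cast card_image_le.trans_lt <|
        (card_powerset s).trans_lt (Nat.pow_lt_pow_succ one_lt_two)
    obtain ⟨x, hx⟩ := exists_not_mem_of_card_lt_enatCard hcard
    refine ⟨Function.update w a x, fun t ht hne => ?_⟩
    by_cases hat : a ∈ t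
    · rw [← add_sum_erase t _ hat, Function.update_self,
        sum_update_of_notMem (notMem_erase a t), Ne, add_eq_zero_iff_eq_neg]
      rintro rfl
      exact hx (mem_image_of_mem _ (mem_powerset.2 (subset_insert_iff.1 ht)))
    · rw [sum_update_of_notMem hat]
      exact hw t ((subset_insert_iff_of_notMem hat).1 ht) hne

/- In positive characteristic the ratio of a homothety obtained from a combinatorial line by summing
coordinates may vanish; weighting the coordinates by `w` keeps it nonzero. -/
theorem exists_mono_homothetic_copy_of_sum_ne_zero {ι α κ R M : Type*} [Finite ι] [Semiring R]
    [AddCommMonoid M] [Module R M] (hι : ∀ C : (ι → α) → κ, ∃ l : Line α ι, l.IsMono C)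
    {w : ι → R} (hw : ∀ s : Finset ι, s.Nonempty → ∑ i ∈ s, w i ≠ 0) (f : α → M) (C : M → κ) :
    ∃ t : R, t ≠ 0 ∧ ∃ (b : M) (c : κ), ∀ a, C (t • f a + b) = c := by
  classical
  cases nonempty_fintype ι
  obtain ⟨l, c, hl⟩ := hι fun v => C (∑ i, w i • f (v i))
  set s : Finset ι := {i | l.idxFun i = none} with hs
  have hs_nonempty : s.Nonempty := l.proper.imp fun i hi => by simpa [hs] using hi
  refine ⟨∑ i ∈ s, w i, hw s hs_nonempty,
    ∑ i ∈ sᶜ, w i • ((l.idxFun i).map f).getD 0, c, fun a => ?_⟩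
  rw [← hl a]
  dsimp only
  rw [← sum_add_sum_compl s, sum_smul]
  congr 2
  · refine sum_congr rfl fun i hi => ?_
    rw [l.apply_none _ _ (mem_filter.1 hi).2]
  · refine sum_congr rfl fun i hi => ?_
    obtain ⟨y, hy⟩ := Option.ne_none_iff_exists'.1 (by simpa [hs] using hi : l.idxFun i ≠ none)
    rw [l.apply_some hy, hy, Option.map_some, Option.getD_some]

theorem exists_mono_homothetic_copy_of_le_enatCard (n r : ℕ) :
    ∃ N : ℕ, ∀ {R M κ : Type*} [Ring R] [AddCommMonoid M] [Module R M] [Finite κ],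
      N ≤ ENat.card R → Nat.card κ ≤ r → ∀ (A : Finset M), #A ≤ n → ∀ C : M → κ,
      ∃ t : R, t ≠ 0 ∧ ∃ (b : M) (c : κ), ∀ a ∈ A, C (t • a + b) = c := by
  obtain ⟨ι, _, hι⟩ := Line.exists_mono_in_high_dimension (Fin n) (Fin r)
  refine ⟨2 ^ Fintype.card ι, fun {R M κ} _ _ _ _ hR hκ A hA C => ?_⟩
  have := Fintype.ofFinite κ
  obtain ⟨eA⟩ : Nonempty (A ↪ Fin n) := Function.Embedding.nonempty_of_card_le (by simpa using hA)
  obtain ⟨eκ⟩ : Nonempty (κ ↪ Fin r) := Function.Embedding.nonempty_of_card_le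
    (by rwa [Fintype.card_fin, ← Nat.card_eq_fintype_card])
  obtain ⟨w, hw⟩ := exists_forall_subset_sum_ne_zero (G := R) (univ : Finset ι) (by simpa using hR)
  obtain ⟨t, ht, b, c, hc⟩ := exists_mono_homothetic_copy_of_sum_ne_zero hι
    (fun s => hw s s.subset_univ) (Function.extend eA (↑) 0) (eκ ∘ C)
  have hmono : ∀ a ∈ A, eκ (C (t • a + b)) = c := fun a ha => by
    rw [← hc (eA ⟨a, ha⟩), eA.injective.extend_apply, Function.comp_apply]
  rcases A.eq_empty_or_nonempty with rfl | ⟨a₀, ha₀⟩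
  · exact ⟨t, ht, b, C b, by simp⟩
  · exact ⟨t, ht, b, C (t • a₀ + b), fun a ha => eκ.injective <| by rw [hmono a ha, hmono a₀ ha₀]⟩

theorem map_inv_mul_sub_ne_zero_and_ne_one {F M₀ : Type*} [DivisionRing F] [MulZeroOneClass M₀]
    (χ : F →*₀ M₀) {v b s : F} (hv : v ≠ 0) (h₀ : χ (b - v * s) ≠ 0)
    (hne : χ (b - v * s) ≠ χ v) : χ (v⁻¹ * b - s) ≠ 0 ∧ χ (v⁻¹ * b - s) ≠ 1 := by
  have hχ : χ (b - v * s) = χ v * χ (v⁻¹ * b - s) := by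
    rw [← map_mul, mul_sub, mul_inv_cancel_left₀ hv]
  exact ⟨fun h => h₀ (by rw [hχ, h, mul_zero]), fun h => hne (by rw [hχ, h, mul_one])⟩

theorem exists_forall_map_sub_ne_zero_and_ne_one (k r : ℕ) :
    ∃ N : ℕ, ∀ {F M₀ : Type*} [DivisionRing F] [GroupWithZero M₀] [Finite M₀],
      N ≤ ENat.card F → Nat.card M₀ ≤ r → ∀ (χ : F →*₀ M₀) {g : F}, g ≠ 0 → χ g ≠ 1 →
      ∀ S : Finset F, #S ≤ k → ∃ x, ∀ s ∈ S, χ (x - s) ≠ 0 ∧ χ (x - s) ≠ 1 := by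
  classical
  obtain ⟨N, hN⟩ := exists_mono_homothetic_copy_of_le_enatCard (2 + (k + k)) r
  refine ⟨N, fun {F M₀} _ _ _ hF hM₀ χ g hg hχg S hS => ?_⟩
  -- The points `0` and `1` prevent the monochromatic copy from collapsing to `{0}`.
  have hcard : #({0, 1} ∪ (S ∪ S.image (g * ·))) ≤ 2 + (k + k) :=
    (card_union_le _ _).trans <| add_le_add card_le_two <|
      (card_union_le _ _).trans <| add_le_add hS <| card_image_le.trans hS
  obtain ⟨t, ht, b, c, hc⟩ := hN hF hM₀ _ hcard χ
  have hc₀ : c ≠ 0 := by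
    rintro rfl
    have hb : b = 0 := by simpa using hc 0 (by simp)
    exact ht (by simpa [hb] using hc 1 (by simp))
  have hcS : ∀ s ∈ S, χ (b - -t * s) = c := fun s hs => by
    rw [neg_mul, sub_neg_eq_add, add_comm]
    exact hc s (mem_union_right _ (mem_union_left _ hs))
  have hcgS : ∀ s ∈ S, χ (b - -t * g * s) = c := fun s hs => by
    rw [mul_assoc, neg_mul, sub_neg_eq_add, add_comm]
    exact hc (g * s) (mem_union_right _ (mem_union_right _ (mem_image_of_mem _ hs)))
  suffices ∃ v ≠ 0, c ≠ χ v ∧ ∀ s ∈ S, χ (b - v * s) = c by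
    obtain ⟨v, hv, hne, hvS⟩ := this
    exact ⟨v⁻¹ * b, fun s hs => map_inv_mul_sub_ne_zero_and_ne_one χ hv
      (by rwa [hvS s hs]) (by rwa [hvS s hs])⟩
  by_cases hct : c = χ (-t)
  · refine ⟨-t * g, mul_ne_zero (neg_ne_zero.2 ht) hg, fun hctg => hχg ?_, hcgS⟩
    rw [map_mul, ← hct] at hctg
    exact (mul_eq_left₀ hc₀).1 hctg.symm
  · exact ⟨-t, neg_ne_zero.2 ht, hct, hcS⟩

theorem exists_forall_sub_eq_unit_notMem (k r : ℕ) :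
    ∃ N : ℕ, ∀ {F : Type*} [DivisionRing F] (H : Subgroup Fˣ) [H.Normal] [H.FiniteIndex],
      N ≤ ENat.card F → H.index ≤ r → H ≠ ⊤ → ∀ S : Finset F, #S ≤ k →
      ∃ x, ∀ s ∈ S, ∃ u ∉ H, x - s = u := by
  classical
  obtain ⟨N, hN⟩ := exists_forall_map_sub_ne_zero_and_ne_one k (r + 1)
  refine ⟨N, fun {F} _ H _ _ hF hr hH S hS => ?_⟩
  let χ : F →*₀ WithZero (Fˣ ⧸ H) := (WithZero.map' (QuotientGroup.mk' H)).comp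
    (WithZero.withZeroUnitsEquiv (G := F)).symm.toMonoidWithZeroHom
  have hχ : ∀ u : Fˣ, χ u = 1 ↔ u ∈ H := fun u => by
    simp [χ, ← WithZero.coe_one]
  have : Finite (WithZero (Fˣ ⧸ H)) := inferInstanceAs (Finite (Option (Fˣ ⧸ H)))
  have hcard : Nat.card (WithZero (Fˣ ⧸ H)) ≤ r + 1 :=
    (Finite.card_option (α := Fˣ ⧸ H)).trans_le (Nat.succ_le_succ hr)
  obtain ⟨g, -, hg⟩ := SetLike.exists_of_lt hH.lt_top
  obtain ⟨x, hx⟩ := hN hF hcard χ g.ne_zero (mt (hχ g).1 hg) S hS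
  refine ⟨x, fun s hs => ?_⟩
  obtain ⟨hx0, hx1⟩ := hx s hs
  obtain ⟨u, hu⟩ := ((map_ne_zero χ).1 hx0).isUnit
  exact ⟨u, fun huH => hx1 (hu ▸ (hχ u).2 huH), hu.symm⟩

theorem index_le_of_add_eq_univ {F : Type*} [Field F] [Finite F] {H : Subgroup Fˣ} {S : Finset F}
    (h : (S : Set F) + insert 0 ((↑) '' (H : Set Fˣ)) = Set.univ) : H.index ≤ 2 * #S := by
  have hH₀ : Set.ncard (insert (0 : F) ((↑) '' (H : Set Fˣ))) ≤ Nat.card H + 1 :=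
    (Set.ncard_insert_le _ _).trans (Nat.succ_le_succ (Set.ncard_image_le (Set.toFinite _)))
  have hF : Nat.card F ≤ #S * (Nat.card H + 1) := by
    have hadd := Set.natCard_add_le (s := (S : Set F)) (t := insert 0 ((↑) '' (H : Set Fˣ)))
    rw [h, Nat.card_univ, Nat.card_coe_set_eq, Nat.card_coe_set_eq, Set.ncard_coe_finset] at hadd
    exact hadd.trans (Nat.mul_le_mul_left _ hH₀)
  have hHpos : 0 < Nat.card H := Nat.card_pos
  refine Nat.le_of_mul_le_mul_right ?_ hHpos
  calc H.index * Nat.card H = Nat.card F - 1 := by rw [H.index_mul_card, Nat.card_units]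
    _ ≤ #S * (Nat.card H + Nat.card H) :=
      (Nat.sub_le _ _).trans (hF.trans (Nat.mul_le_mul_left _ (by omega)))
    _ = 2 * #S * Nat.card H := by ring

theorem exists_natCard_le_of_add_eq_univ (k : ℕ) :
    ∃ N : ℕ, ∀ {F : Type*} [Field F] [Finite F] {H : Subgroup Fˣ} {S : Finset F},
      H ≠ ⊤ → #S ≤ k → (S : Set F) + insert 0 ((↑) '' (H : Set Fˣ)) = Set.univ →
      Nat.card F ≤ N := by
  obtain ⟨N, hN⟩ := exists_forall_sub_eq_unit_notMem k (2 * k)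
  refine ⟨N, fun {F} _ _ H S hH hS h => ?_⟩
  by_contra! hlt
  obtain ⟨x, hx⟩ := hN H (by simpa [ENat.card_eq_coe_natCard] using hlt.le)
    ((index_le_of_add_eq_univ h).trans (Nat.mul_le_mul_left 2 hS)) hH S hS
  obtain ⟨s, hs, b, hb, rfl⟩ := Set.mem_add.1 (h ▸ Set.mem_univ x)
  obtain ⟨u, hu, hub⟩ := hx s hs
  rw [add_sub_cancel_left] at hub
  rcases hb with rfl | ⟨v, hv, rfl⟩
  · exact u.ne_zero hub.symm
  · exact hu (Units.ext hub ▸ hv)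

/-- The set `C_n` of `n`-potents of a monoid, defined here for all `n`, including `n ≤ 1`. -/
def potents (M : Type*) [Monoid M] (n : ℕ) : Set M := {x | x ^ n = x}

theorem potents_add_one (M : Type*) [CommMonoidWithZero M] [IsCancelMulZero M] {n : ℕ}
    (hn : n ≠ 0) :
    potents M (n + 1) = insert 0 ((↑) '' (rootsOfUnity n M : Set Mˣ)) := by
  ext x
  refine ⟨fun hx => or_iff_not_imp_left.2 fun hx0 => ?_, ?_⟩
  · have hxn : x ^ n = 1 := mul_right_cancel₀ hx0 (by rw [← pow_succ, one_mul]; exact hx)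
    exact ⟨Units.ofPowEqOne x n hxn hn, Units.pow_ofPowEqOne hxn hn, rfl⟩
  · rintro (rfl | ⟨u, hu, rfl⟩)
    · exact zero_pow n.succ_ne_zero
    · rw [SetLike.mem_coe, mem_rootsOfUnity'] at hu
      rw [potents, Set.mem_ofPred_eq, pow_succ, hu, one_mul]

theorem ncard_potents_le (R : Type*) [CommRing R] [IsDomain R] {n : ℕ} (hn : 1 < n) :
    (potents R n).ncard ≤ n := by
  obtain ⟨m, rfl⟩ : ∃ m, n = m + 1 := Nat.exists_eq_add_one.2 (by omega)
  have : NeZero m := ⟨by omega⟩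
  rw [potents_add_one R (NeZero.ne m)]
  exact (Set.ncard_insert_le _ _).trans <| Nat.succ_le_succ <|
    (Set.ncard_image_le (inferInstanceAs (Finite (rootsOfUnity m R)))).trans (card_rootsOfUnity R m)

theorem rootsOfUnity_eq_top_iff {F : Type*} [Field F] [Fintype F] {n : ℕ} :
    rootsOfUnity n F = ⊤ ↔ Fintype.card F - 1 ∣ n := by
  simp only [← FiniteField.forall_pow_eq_one_iff, Subgroup.eq_top_iff', mem_rootsOfUnity]

theorem exists_card_le_of_potents_add_potents_eq_univ {k : ℕ} (hk : 1 < k) :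
    ∃ N : ℕ, ∀ {F : Type*} [Field F] [Fintype F] {n : ℕ}, 1 < n → n < Fintype.card F →
      potents F k + potents F n = Set.univ → Fintype.card F ≤ N := by
  obtain ⟨N, hN⟩ := exists_natCard_le_of_add_eq_univ k
  refine ⟨N, fun {F} _ _ n hn hnF h => ?_⟩
  obtain ⟨m, rfl⟩ : ∃ m, n = m + 1 := Nat.exists_eq_add_one.2 (by omega)
  have hm : m ≠ 0 := by omega
  have hfin : (potents F k).Finite := Set.toFinite _
  rw [← Nat.card_eq_fintype_card]
  refine hN (H := rootsOfUnity m F) (S := hfin.toFinset) ?_ ?_ ?_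
  · rw [Ne, rootsOfUnity_eq_top_iff]
    exact Nat.not_dvd_of_pos_of_lt (by omega) (by omega)
  · exact (Set.ncard_eq_toFinset_card _ hfin).symm.trans_le (ncard_potents_le F hk)
  · rwa [hfin.coe_toFinset, ← potents_add_one F hm]

theorem finite_pairs_sum_of_five_potent_and_n_potent_general {k : ℕ} (hk : 1 < k) :
    {p : ℕ × ℕ | IsPrimePow p.1 ∧ 1 < p.2 ∧ p.2 < p.1 ∧
      ∀ (F : Type) [Field F] [Fintype F], Fintype.card F = p.1 →
        ∀ γ : F, ∃ a b : F, a ^ k = a ∧ b ^ p.2 = b ∧ a + b = γ}.Finite := by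
  obtain ⟨N, hN⟩ := exists_card_le_of_potents_add_potents_eq_univ hk
  refine (Set.finite_Iic (N, N)).subset ?_
  rintro ⟨q, n⟩ ⟨hq, hn, hnq, hsum⟩
  obtain ⟨p, e, hp, he, rfl⟩ := (isPrimePow_nat_iff q).1 hq
  have : Fact p.Prime := ⟨hp⟩
  have := Fintype.ofFinite (GaloisField p e)
  have hcard : Fintype.card (GaloisField p e) = p ^ e := by
    rw [← Nat.card_eq_fintype_card, GaloisField.card p e he.ne']
  have hqN : p ^ e ≤ N := hcard ▸ hN hn (hcard ▸ hnq) (Set.eq_univ_of_forall fun γ =>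
    let ⟨a, b, ha, hb, hab⟩ := hsum (GaloisField p e) hcard γ
    Set.mem_add.2 ⟨a, ha, b, hb, hab⟩)
  exact ⟨hqN, hnq.le.trans hqN⟩

/-- There are only finitely many pairs `(q, n)` with `q` a prime power, `1 < n < q`,
`(n-1) ∣ (q-1)`, such that every element of the finite field with `q` elements is the
sum of a `5`-potent and an `n`-potent. -/
theorem finite_pairs_sum_of_five_potent_and_n_potent :
    {p : ℕ × ℕ | IsPrimePow p.1 ∧ 1 < p.2 ∧ p.2 < p.1 ∧ (p.2 - 1) ∣ (p.1 - 1) ∧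
      ∀ (F : Type) [Field F] [Fintype F], Fintype.card F = p.1 →
        ∀ γ : F, ∃ a b : F, a ^ 5 = a ∧ b ^ p.2 = b ∧ a + b = γ}.Finite :=
  (finite_pairs_sum_of_five_potent_and_n_potent_general (k := 5) (by norm_num)).subset
    fun _ ⟨hq, hn, hnq, _, hsum⟩ => ⟨hq, hn, hnq, hsum⟩
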